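/- Let f be an ergodic invertible measure-preserving transformation of a standard Borel probability space (X,μ) and let (f,A) be an essentially unbounded cocycle with values in SL±(2,ℝ). Let μ̂ be an (f,A)-invariant probability measure on X × ℙ(ℝ²) (projecting to μ and invariant under F(x,E) = (f(x), A(x)E)), with disintegration dμ̂ = ν_x dμ(x) over the projection to X. Then for μ-almost every x ∈ X, sup{ ν_x({E}) : E ∈ ℙ(ℝ²) } ≥ 1/2; equivalently, for μ-a.e. x the conditional measure ν_x has an atom of mass at least 1/2. -/

import Mathlib

open MeasureTheory Filter
open scoped ENNReal

/-- Matrices are measurable as functions of their entries. -/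
instance matrixMeasurableSpace {m n α : Type*} [MeasurableSpace α] :
    MeasurableSpace (Matrix m n α) :=
  show MeasurableSpace (m → n → α) from inferInstance

/-- The shift map on two-sided sequences. -/
def shift {Y : Type*} (ω : ℤ → Y) : ℤ → Y := fun n => ω (n + 1)

/-- The skew-shift `f̄(ω,x) = (θω, f_{ω₀}(x))` of a random transformation. -/
def fbar {Y X : Type*} (f : Y → X → X) : (ℤ → Y) × X → (ℤ → Y) × X :=
  fun q => (shift q.1, f (q.1 0) q.2)

/-- The locally constant map `Ā(ω,x) = A_{ω₀}(x)` defining a random cocycle. -/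
def Abar {Y X G : Type*} (A : Y → X → G) : (ℤ → Y) × X → G := fun q => A (q.1 0) q.2

/-- Iterates of a cocycle: `cocycleIter T A n z = A(T^{n-1} z) ⋯ A(T z) A(z)`. -/
def cocycleIter {Z G : Type*} [Monoid G] (T : Z → Z) (A : Z → G) : ℕ → Z → G
  | 0, _ => 1
  | n + 1, z => cocycleIter T A n (T z) * A z

/-- Lower asymptotic density of a set of natural numbers. -/
noncomputable def lowerDensity (D : Set ℕ) : ℝ :=
  Filter.liminf (fun n : ℕ => ((D ∩ Set.Iic n).ncard : ℝ) / n) Filter.atTop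

/-- A sequence of reals converges essentially to infinity: for every `K > 0` the set
of times at which the sequence is `≤ K` has lower asymptotic density zero. -/
def ConvergesEssentiallyToInfinity (u : ℕ → ℝ) : Prop :=
  ∀ K > (0 : ℝ), lowerDensity {n | u n ≤ K} = 0

/-- The operator norm of a real `d × d` matrix acting on Euclidean space. -/
noncomputable def opNorm {d : ℕ} (M : Matrix (Fin d) (Fin d) ℝ) : ℝ :=
  ‖LinearMap.toContinuousLinearMap (Matrix.toEuclideanLin M)‖

/-- The projective space of `ℝ^d`. -/
abbrev Proj (d : ℕ) := Projectivization ℝ (Fin d → ℝ)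

noncomputable instance (d : ℕ) : MeasurableSpace (Proj d) :=
  show MeasurableSpace (Quotient _) from inferInstance

lemma glInjective {d : ℕ} (A : GL (Fin d) ℝ) :
    Function.Injective (Matrix.toLin' (A : Matrix (Fin d) (Fin d) ℝ)) := by
  have h : Function.LeftInverse
      (Matrix.toLin' (((A⁻¹ : GL (Fin d) ℝ)) : Matrix (Fin d) (Fin d) ℝ))
      (Matrix.toLin' ((A : Matrix (Fin d) (Fin d) ℝ))) := by
    intro v
    rw [← Matrix.toLin'_mul_apply]
    have h1 : ((A⁻¹ : GL (Fin d) ℝ) : Matrix (Fin d) (Fin d) ℝ) *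
        (A : Matrix (Fin d) (Fin d) ℝ) = 1 := by
      exact_mod_cast A.inv_mul
    rw [h1]
    simp
  exact h.injective

/-- The projective action of an invertible matrix on `ℙ(ℝ^d)`. -/
noncomputable def projAction {d : ℕ} (A : GL (Fin d) ℝ) : Proj d → Proj d :=
  Projectivization.map (Matrix.toLin' (A : Matrix (Fin d) (Fin d) ℝ)) (glInjective A)

/-- The maximum of `0` and the Birkhoff sums of `g` along `f` of length at most `n`. -/
noncomputable def maxBirkhoffSum {X : Type*} (f : X → X) (g : X → ℝ) : ℕ → X → ℝ
  | 0, _ => 0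
  | n + 1, x => max 0 (g x + maxBirkhoffSum f g n (f x))

lemma maxBirkhoffSum_nonneg {X : Type*} (f : X → X) (g : X → ℝ) (n : ℕ) (x : X) :
    0 ≤ maxBirkhoffSum f g n x := by
  cases n with
  | zero => exact le_rfl
  | succ n => exact le_max_left _ _

lemma maxBirkhoffSum_le_succ {X : Type*} (f : X → X) (g : X → ℝ) (n : ℕ) (x : X) :
    maxBirkhoffSum f g n x ≤ maxBirkhoffSum f g (n + 1) x := by
  induction n generalizing x with
  | zero => exact maxBirkhoffSum_nonneg f g 1 x
  | succ n ih => exact max_le_max le_rfl (add_le_add le_rfl (ih (f x)))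

lemma birkhoffSum_le_maxBirkhoffSum {X : Type*} (f : X → X) (g : X → ℝ) (n : ℕ) (x : X) :
    birkhoffSum f g n x ≤ maxBirkhoffSum f g n x := by
  induction n generalizing x with
  | zero => simp [maxBirkhoffSum]
  | succ n ih =>
    rw [birkhoffSum_succ']
    exact le_max_of_le_right (add_le_add le_rfl (ih (f x)))

lemma integrable_maxBirkhoffSum {X : Type*} [MeasurableSpace X] {μ : Measure X} {f : X → X}
    (hf : MeasurePreserving f μ μ) {g : X → ℝ} (hg : Integrable g μ) (n : ℕ) :
    Integrable (maxBirkhoffSum f g n) μ := by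
  induction n with
  | zero => exact integrable_zero X ℝ μ
  | succ n ih => exact (integrable_zero X ℝ μ).sup (hg.add (hf.integrable_comp_of_integrable ih))

lemma measurable_maxBirkhoffSum {X : Type*} [MeasurableSpace X] {f : X → X}
    (hf : Measurable f) {g : X → ℝ} (hg : Measurable g) (n : ℕ) :
    Measurable (maxBirkhoffSum f g n) := by
  induction n with
  | zero => exact measurable_const
  | succ n ih => exact measurable_const.max (hg.add (ih.comp hf))

/-- The maximal ergodic inequality. -/
lemma setIntegral_maxBirkhoffSum_pos_nonneg {X : Type*} [MeasurableSpace X] {μ : Measure X}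
    {f : X → X} (hf : MeasurePreserving f μ μ) {g : X → ℝ} (hg : Integrable g μ)
    (hgm : Measurable g) (n : ℕ) :
    0 ≤ ∫ x in {x | 0 < maxBirkhoffSum f g n x}, g x ∂μ := by
  set M := maxBirkhoffSum f g n with hM
  set P := {x | 0 < M x} with hP
  have hMi : Integrable M μ := integrable_maxBirkhoffSum hf hg n
  have hMfi : Integrable (M ∘ f) μ := hf.integrable_comp_of_integrable hMi
  have hMm : Measurable M := measurable_maxBirkhoffSum hf.measurable hgm n
  have hPm : MeasurableSet P := measurableSet_lt measurable_const hMm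
  have hle : ∀ x ∈ P, M x - (M ∘ f) x ≤ g x := by
    intro x hx
    cases n with
    | zero => exact absurd (show (0 : ℝ) < 0 from hx) (lt_irrefl _)
    | succ n =>
      have hx' : 0 < max 0 (g x + maxBirkhoffSum f g n (f x)) := hx
      have h1 : M x = g x + maxBirkhoffSum f g n (f x) :=
        max_eq_right ((lt_max_iff.1 hx').resolve_left (lt_irrefl _)).le
      have h2 : maxBirkhoffSum f g n (f x) ≤ M (f x) := maxBirkhoffSum_le_succ f g n (f x)
      simp only [Function.comp_apply]
      linarith
  have hPc : ∫ x in P, M x ∂μ = ∫ x, M x ∂μ := by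
    apply setIntegral_eq_integral_of_forall_compl_eq_zero
    intro x hx
    exact le_antisymm (not_lt.1 hx) (maxBirkhoffSum_nonneg f g n x)
  have hPf : ∫ x in P, (M ∘ f) x ∂μ ≤ ∫ x, (M ∘ f) x ∂μ :=
    setIntegral_le_integral hMfi
      (Eventually.of_forall fun x => maxBirkhoffSum_nonneg f g n (f x))
  have hcomp : ∫ x, (M ∘ f) x ∂μ = ∫ x, M x ∂μ := by
    conv_rhs => rw [← hf.map_eq]
    rw [integral_map hf.measurable.aemeasurable hMm.aestronglyMeasurable]
    rfl
  have hmono : ∫ x in P, (M x - (M ∘ f) x) ∂μ ≤ ∫ x in P, g x ∂μ :=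
    setIntegral_mono_on (hMi.sub hMfi).integrableOn hg.integrableOn hPm hle
  rw [integral_sub hMi.integrableOn hMfi.integrableOn] at hmono
  linarith

/-- A set is null if almost every one of its points visits it with arbitrarily small average
frequency at some time. -/
lemma measure_eq_zero_of_small_visit_frequency {X : Type*} [MeasurableSpace X] {μ : Measure X}
    [IsProbabilityMeasure μ] {f : X → X} (hf : MeasurePreserving f μ μ) {G : Set X}
    (hG : MeasurableSet G)
    (h : ∀ᵐ x ∂μ, x ∈ G → ∀ δ > (0 : ℝ), ∃ n : ℕ, birkhoffSum f (G.indicator 1) n x < δ * n) :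
    μ G = 0 := by
  suffices hδ : ∀ δ : NNReal, 0 < δ → μ G ≤ δ from
    le_antisymm (ENNReal.le_of_forall_pos_le_add fun δ hδ0 _ => by simpa using hδ δ hδ0) zero_le
  intro δ hδ
  set g : X → ℝ := fun x => δ - G.indicator 1 x with hg
  have hind : Integrable (G.indicator (1 : X → ℝ)) μ := (integrable_const (1 : ℝ)).indicator hG
  have hgm : Measurable g := measurable_const.sub (measurable_one.indicator hG)
  have hgi : Integrable g μ := (integrable_const _).sub hind
  set P : ℕ → Set X := fun n => {x | 0 < maxBirkhoffSum f g n x} with hP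
  have hPm : ∀ n, MeasurableSet (P n) := fun n =>
    measurableSet_lt measurable_const (measurable_maxBirkhoffSum hf.measurable hgm n)
  have hmono : Monotone fun n => G ∩ P n :=
    monotone_nat_of_le_succ fun n x hx =>
      ⟨hx.1, lt_of_lt_of_le hx.2 (maxBirkhoffSum_le_succ f g n x)⟩
  have hbound : ∀ n, μ (G ∩ P n) ≤ δ := by
    intro n
    have h0 := setIntegral_maxBirkhoffSum_pos_nonneg hf hgi hgm n
    have h1 : ∫ x in P n, g x ∂μ = μ.real (P n) * δ - μ.real (G ∩ P n) := by
      rw [hg, integral_sub (integrable_const _) hind.integrableOn, setIntegral_const,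
        integral_indicator_one hG, measureReal_restrict_apply hG, smul_eq_mul]
    have h2 : μ.real (P n) ≤ 1 := measureReal_le_one
    have h3 : μ.real (G ∩ P n) ≤ δ := by
      have : μ.real (P n) * δ ≤ 1 * δ := mul_le_mul_of_nonneg_right h2 δ.2
      rw [hP] at h1 this ⊢
      linarith
    rw [← ofReal_measureReal, ← ENNReal.ofReal_coe_nnreal]
    exact ENNReal.ofReal_le_ofReal h3
  have hsub : μ G ≤ μ (⋃ n, G ∩ P n) := by
    apply measure_mono_ae
    filter_upwards [h] with x hx hxG
    obtain ⟨n, hn⟩ := hx hxG δ hδ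
    refine Set.mem_iUnion.2 ⟨n, hxG, lt_of_lt_of_le ?_ (birkhoffSum_le_maxBirkhoffSum f g n x)⟩
    have : birkhoffSum f g n x = δ * n - birkhoffSum f (G.indicator 1) n x := by
      simp [birkhoffSum, hg, mul_comm]
    rw [this]
    linarith
  rw [hmono.measure_iUnion] at hsub
  exact hsub.trans (iSup_le hbound)

lemma exists_birkhoffSum_lt_of_lowerDensity_eq_zero {X : Type*} {f : X → X} {G : Set X}
    {D : Set ℕ} {x : X} (hD : lowerDensity D = 0) (hGD : ∀ n, f^[n] x ∈ G → n ∈ D) {δ : ℝ}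
    (hδ : 0 < δ) : ∃ n : ℕ, birkhoffSum f (G.indicator (1 : X → ℝ)) n x < δ * n := by
  classical
  have hfreq : ∃ᶠ n : ℕ in atTop, ((D ∩ Set.Iic n).ncard : ℝ) / n < δ := by
    refine frequently_lt_of_liminf_lt ?_ (hD.trans_lt hδ)
    refine IsBoundedUnder.isCoboundedUnder_ge ⟨2, eventually_map.2 ?_⟩
    filter_upwards [eventually_ge_atTop 1] with n hn
    have h1 : (D ∩ Set.Iic n).ncard ≤ n + 1 := by
      refine (Set.ncard_le_ncard Set.inter_subset_right (Set.finite_Iic n)).trans ?_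
      simp [Set.ncard_eq_toFinset_card']
    have h2 : (1 : ℝ) ≤ n := by exact_mod_cast hn
    rw [div_le_iff₀ (by linarith)]
    have h3 : ((D ∩ Set.Iic n).ncard : ℝ) ≤ n + 1 := by exact_mod_cast h1
    linarith
  obtain ⟨n, hn, hn1⟩ := (hfreq.and_eventually (eventually_ge_atTop 1)).exists
  refine ⟨n, lt_of_le_of_lt ?_ ((div_lt_iff₀ (by exact_mod_cast hn1)).1 hn)⟩
  have hsum : birkhoffSum f (G.indicator (1 : X → ℝ)) n x
      = (((Finset.range n).filter fun k => f^[k] x ∈ G).card : ℝ) := by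
    simp [birkhoffSum, Set.indicator_apply]
  rw [hsum, ← Set.ncard_coe_finset]
  refine Nat.cast_le.2 (Set.ncard_le_ncard (fun k hk => ?_)
    ((Set.finite_Iic n).subset Set.inter_subset_right))
  simp only [Finset.coe_filter, Finset.mem_range, Set.mem_ofPred_eq] at hk
  exact ⟨hGD k hk.2, hk.1.le⟩

/-- The open ball around the direction `z` in the projective line: the lines spanned by those `v`
whose angle `θ` with `z` satisfies `sin θ ^ 2 < r`. -/
def projBall (z : Circle) (r : ℝ) : Set (Proj 2) :=
  {E | (E.rep 0 * (z : ℂ).im - E.rep 1 * (z : ℂ).re) ^ 2 < r * (E.rep 0 ^ 2 + E.rep 1 ^ 2)}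

lemma mk_mem_projBall {z : Circle} {r : ℝ} {v : Fin 2 → ℝ} (hv : v ≠ 0) :
    Projectivization.mk ℝ v hv ∈ projBall z r ↔
      (v 0 * (z : ℂ).im - v 1 * (z : ℂ).re) ^ 2 < r * (v 0 ^ 2 + v 1 ^ 2) := by
  obtain ⟨a, ha⟩ := Projectivization.exists_smul_eq_mk_rep ℝ v hv
  have ha0 : 0 < (a : ℝ) ^ 2 := sq_pos_of_ne_zero a.ne_zero
  simp only [projBall, Set.mem_ofPred_eq, ← ha, Units.smul_def, Pi.smul_apply, smul_eq_mul]
  rw [← mul_lt_mul_iff_right₀ ha0 (b := (v 0 * (z : ℂ).im - v 1 * (z : ℂ).re) ^ 2)]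
  constructor <;> intro h <;> nlinarith

lemma measurable_projMk {d : ℕ} :
    Measurable fun v : {v : Fin d → ℝ // v ≠ 0} => Projectivization.mk ℝ v.1 v.2 :=
  measurable_quotient_mk''

lemma measurable_of_comp_projMk {d : ℕ} {β : Type*} [MeasurableSpace β] {g : Proj d → β}
    (h : Measurable fun v : {v : Fin d → ℝ // v ≠ 0} => g (Projectivization.mk ℝ v.1 v.2)) :
    Measurable g :=
  measurable_from_quotient.2 h

lemma measurable_subtype_coord {d : ℕ} (i : Fin d) :
    Measurable fun v : {v : Fin d → ℝ // v ≠ 0} => v.1 i :=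
  (measurable_pi_apply i).comp measurable_subtype_coe

lemma measurableSet_projBall (z : Circle) (r : ℝ) : MeasurableSet (projBall z r) := by
  refine measurableSet_quotient.2 ?_
  have : (Quotient.mk'' ⁻¹' projBall z r : Set {v : Fin 2 → ℝ // v ≠ 0}) =
      {v | (v.1 0 * (z : ℂ).im - v.1 1 * (z : ℂ).re) ^ 2 < r * (v.1 0 ^ 2 + v.1 1 ^ 2)} := by
    ext v
    exact mk_mem_projBall v.2
  rw [this]
  have h0 := measurable_subtype_coord (0 : Fin 2)
  have h1 := measurable_subtype_coord (1 : Fin 2)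
  exact measurableSet_lt (((h0.mul_const _).sub (h1.mul_const _)).pow_const 2)
    (((h0.pow_const 2).add (h1.pow_const 2)).const_mul r)

/-- A measurable choice of a nonzero vector on each line of the plane. -/
lemma exists_measurable_section :
    ∃ s : Proj 2 → {v : Fin 2 → ℝ // v ≠ 0}, Measurable s ∧
      ∀ E, Projectivization.mk ℝ (s E).1 (s E).2 = E := by
  classical
  let s : Proj 2 → Fin 2 → ℝ := fun E =>
    if E.rep 0 ≠ 0 then ![1, E.rep 1 / E.rep 0] else ![0, 1]
  have hs0 : ∀ E, s E ≠ 0 := by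
    intro E h
    by_cases h0 : E.rep 0 = 0
    · simpa [s, h0] using congrFun h 1
    · simpa [s, h0] using congrFun h 0
  have hmk : ∀ v : {v : Fin 2 → ℝ // v ≠ 0}, s (Projectivization.mk ℝ v.1 v.2) =
      if v.1 0 ≠ 0 then ![1, v.1 1 / v.1 0] else ![0, 1] := by
    intro v
    obtain ⟨a, ha⟩ := Projectivization.exists_smul_eq_mk_rep ℝ v.1 v.2
    simp only [s, ← ha, Units.smul_def, Pi.smul_apply, smul_eq_mul]
    have ha0 : (a : ℝ) ≠ 0 := a.ne_zero
    by_cases h0 : v.1 0 = 0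
    · simp [h0]
    · simp [h0, mul_div_mul_left]
  have hsm : Measurable s := by
    refine measurable_of_comp_projMk ?_
    simp only [hmk]
    refine Measurable.ite ?_ ?_ measurable_const
    · exact (measurableSet_eq_fun (measurable_subtype_coord 0) measurable_const).compl
    · refine measurable_pi_iff.2 fun i => ?_
      fin_cases i
      · exact measurable_const
      · exact (measurable_subtype_coord 1).div (measurable_subtype_coord 0)
  refine ⟨fun E => ⟨s E, hs0 E⟩, hsm.subtype_mk, fun E => ?_⟩
  conv_rhs => rw [← E.mk_rep]
  rw [Projectivization.mk_eq_mk_iff']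
  by_cases h0 : E.rep 0 = 0
  · have h1 : E.rep 1 ≠ 0 := fun h1 => E.rep_nonzero (by ext i; fin_cases i <;> assumption)
    refine ⟨(E.rep 1)⁻¹, ?_⟩
    ext i
    fin_cases i <;> simp [s, h0, h1]
  · refine ⟨(E.rep 0)⁻¹, ?_⟩
    ext i
    fin_cases i <;> simp [s, h0, div_eq_inv_mul]

lemma projAction_mk {d : ℕ} (A : GL (Fin d) ℝ) {v : Fin d → ℝ} (hv : v ≠ 0)
    (hAv : (A : Matrix (Fin d) (Fin d) ℝ).mulVec v ≠ 0) :
    projAction A (Projectivization.mk ℝ v hv) = Projectivization.mk ℝ _ hAv :=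
  rfl

lemma mulVec_ne_zero_of_GL {d : ℕ} (A : GL (Fin d) ℝ) {v : Fin d → ℝ} (hv : v ≠ 0) :
    (A : Matrix (Fin d) (Fin d) ℝ).mulVec v ≠ 0 := fun h =>
  hv (glInjective A (by simpa using h))

lemma projAction_mul {d : ℕ} (A B : GL (Fin d) ℝ) (E : Proj d) :
    projAction (A * B) E = projAction A (projAction B E) := by
  induction E using Projectivization.ind with
  | h v hv =>
    rw [projAction_mk B hv (mulVec_ne_zero_of_GL B hv),
      projAction_mk A _ (mulVec_ne_zero_of_GL A (mulVec_ne_zero_of_GL B hv)),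
      projAction_mk (A * B) hv (mulVec_ne_zero_of_GL _ hv)]
    congr 1
    simp [Matrix.mulVec_mulVec]

lemma projAction_one {d : ℕ} (E : Proj d) : projAction (1 : GL (Fin d) ℝ) E = E := by
  induction E using Projectivization.ind with
  | h v hv =>
    rw [projAction_mk 1 hv (mulVec_ne_zero_of_GL 1 hv)]
    congr 1
    simp

/-- The skew product of a base map with a measurable cocycle is measurable. -/
lemma measurable_skewProduct {X : Type*} [MeasurableSpace X] {f : X → X} (hf : Measurable f)
    {A : X → GL (Fin 2) ℝ} (hA : Measurable fun x => (A x : Matrix (Fin 2) (Fin 2) ℝ)) :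
    Measurable fun q : X × Proj 2 => (f q.1, projAction (A q.1) q.2) := by
  obtain ⟨s, hs, hsE⟩ := exists_measurable_section
  refine (hf.comp measurable_fst).prodMk ?_
  have h1 : (fun q : X × Proj 2 => projAction (A q.1) q.2) = fun q =>
      Projectivization.mk ℝ _ (mulVec_ne_zero_of_GL (A q.1) (s q.2).2) := by
    funext q
    conv_lhs => rw [← hsE q.2]
    rfl
  rw [h1]
  have hentry : ∀ i j, Measurable fun q : X × Proj 2 => (A q.1 : Matrix (Fin 2) (Fin 2) ℝ) i j :=
    fun i j => (measurable_pi_iff.1 (measurable_pi_iff.1 hA i) j).comp measurable_fst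
  have hsm : ∀ j, Measurable fun q : X × Proj 2 => (s q.2).1 j :=
    fun j => (measurable_pi_iff.1 (measurable_subtype_coe.comp hs) j).comp measurable_snd
  have hvec : Measurable fun q : X × Proj 2 =>
      (A q.1 : Matrix (Fin 2) (Fin 2) ℝ).mulVec (s q.2).1 := by
    refine measurable_pi_iff.2 fun i => ?_
    simp only [Matrix.mulVec, dotProduct, Fin.sum_univ_two]
    exact ((hentry i 0).mul (hsm 0)).add ((hentry i 1).mul (hsm 1))
  exact measurable_projMk.comp
    (hvec.subtype_mk (h := fun q => mulVec_ne_zero_of_GL (A q.1) (s q.2).2))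

lemma exists_circle_direction (a b : ℝ) :
    ∃ (z : Circle) (ρ : ℝ), a = ρ * (z : ℂ).re ∧ b = ρ * (z : ℂ).im ∧ ρ ^ 2 = a ^ 2 + b ^ 2 := by
  set c : ℂ := ⟨a, b⟩ with hc
  have h : (‖c‖ : ℂ) * (Circle.exp c.arg : ℂ) = c := by
    rw [Circle.coe_exp]
    exact Complex.norm_mul_exp_arg_mul_I c
  refine ⟨Circle.exp c.arg, ‖c‖, ?_, ?_, ?_⟩
  · rw [← Complex.re_ofReal_mul, h]
  · rw [← Complex.im_ofReal_mul, h]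
  · rw [Complex.sq_norm, Complex.normSq_apply]
    ring

lemma circle_re_sq_add_im_sq (z : Circle) : (z : ℂ).re ^ 2 + (z : ℂ).im ^ 2 = 1 := by
  have h := Circle.normSq_coe z
  rw [Complex.normSq_apply] at h
  linarith

lemma projBall_subset_projBall {z w : Circle} {r s : ℝ} (h : 2 * r + 2 * dist z w ^ 2 ≤ s) :
    projBall z r ⊆ projBall w s := by
  intro E hE
  have hd : dist z w ^ 2 =
      ((z : ℂ).re - (w : ℂ).re) ^ 2 + ((z : ℂ).im - (w : ℂ).im) ^ 2 := by
    change dist (z : ℂ) (w : ℂ) ^ 2 = _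
    rw [Complex.dist_eq, Complex.sq_norm, Complex.normSq_apply, Complex.sub_re, Complex.sub_im]
    ring
  simp only [projBall, Set.mem_ofPred_eq] at hE ⊢
  set p := E.rep 0
  set q := E.rep 1
  have h1 : (p * (w : ℂ).im - q * (w : ℂ).re) ^ 2 ≤ 2 * (p * (z : ℂ).im - q * (z : ℂ).re) ^ 2 +
      2 * (p * ((z : ℂ).im - (w : ℂ).im) - q * ((z : ℂ).re - (w : ℂ).re)) ^ 2 := by
    nlinarith [sq_nonneg ((p * (z : ℂ).im - q * (z : ℂ).re) +
      (p * ((z : ℂ).im - (w : ℂ).im) - q * ((z : ℂ).re - (w : ℂ).re)))]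
  have h2 : (p * ((z : ℂ).im - (w : ℂ).im) - q * ((z : ℂ).re - (w : ℂ).re)) ^ 2 ≤
      dist z w ^ 2 * (p ^ 2 + q ^ 2) := by
    rw [hd]
    nlinarith [sq_nonneg (p * ((z : ℂ).re - (w : ℂ).re) + q * ((z : ℂ).im - (w : ℂ).im))]
  have h3 : (2 * r + 2 * dist z w ^ 2) * (p ^ 2 + q ^ 2) ≤ s * (p ^ 2 + q ^ 2) :=
    mul_le_mul_of_nonneg_right h (by positivity)
  linarith

lemma exists_denseSeq_projBall_subset (z : Circle) {r : ℝ} (hr : 0 < r) :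
    ∃ n, projBall z r ⊆ projBall (TopologicalSpace.denseSeq Circle n) (4 * r) := by
  obtain ⟨n, hn⟩ := (TopologicalSpace.denseRange_denseSeq Circle).exists_dist_lt z
    (Real.sqrt_pos.2 hr)
  refine ⟨n, projBall_subset_projBall ?_⟩
  have := Real.lt_sqrt dist_nonneg |>.1 hn
  linarith

/-- A matrix of determinant `±1` with a large row maps the complement of some small ball of the
projective line into a small ball. -/
lemma exists_projAction_mem_projBall (M : GL (Fin 2) ℝ)
    (hdet : (M : Matrix (Fin 2) (Fin 2) ℝ).det ^ 2 = 1) {r : ℝ} (hr : 0 < r) (i : Fin 2)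
    (hrow : 1 < r * ((M : Matrix (Fin 2) (Fin 2) ℝ) i 0 ^ 2 +
      (M : Matrix (Fin 2) (Fin 2) ℝ) i 1 ^ 2)) :
    ∃ z w : Circle, ∀ E ∉ projBall z r, projAction M E ∈ projBall w r := by
  set N := (M : Matrix (Fin 2) (Fin 2) ℝ) with hN
  set a := N i 0 with ha
  set b := N i 1 with hb
  set R := a ^ 2 + b ^ 2 with hR
  have hR0 : 0 < R := pos_of_mul_pos_right (one_pos.trans hrow) hr.le
  obtain ⟨z, ρ, hz1, hz2, hρ⟩ := exists_circle_direction (-b) a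
  obtain ⟨w, σ, hw1, hw2, hσ⟩ :=
    exists_circle_direction (N 0 0 * a + N 0 1 * b) (N 1 0 * a + N 1 1 * b)
  refine ⟨z, w, fun E => ?_⟩
  induction E using Projectivization.ind with
  | h v hv =>
  intro hE
  rw [projAction_mk M hv (mulVec_ne_zero_of_GL M hv), mk_mem_projBall]
  rw [mk_mem_projBall, not_lt] at hE
  have hV : 0 < v 0 ^ 2 + v 1 ^ 2 := by
    by_contra h
    have h0 : v 0 = 0 := by nlinarith [sq_nonneg (v 0), sq_nonneg (v 1)]
    have h1 : v 1 = 0 := by nlinarith [sq_nonneg (v 0), sq_nonneg (v 1)]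
    exact hv (by ext j; fin_cases j <;> assumption)
  set V := v 0 ^ 2 + v 1 ^ 2
  have hρR : ρ ^ 2 = R := by rw [hρ, hR]; ring
  have hrowv : r * V * R ≤ (a * v 0 + b * v 1) ^ 2 := by
    have h1 : (a * v 0 + b * v 1) ^ 2 = ρ ^ 2 * (v 0 * (z : ℂ).im - v 1 * (z : ℂ).re) ^ 2 := by
      have : a * v 0 + b * v 1 = ρ * (v 0 * (z : ℂ).im - v 1 * (z : ℂ).re) := by
        linear_combination v 0 * hz2 - v 1 * hz1
      rw [this]
      ring
    rw [h1, hρR, mul_comm R]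
    exact mul_le_mul_of_nonneg_right hE hR0.le
  have hnorm : ∀ p q : ℝ, (a * p + b * q) ^ 2 ≤
      (N 0 0 * p + N 0 1 * q) ^ 2 + (N 1 0 * p + N 1 1 * q) ^ 2 := by
    intro p q
    have hi : i = 0 ∨ i = 1 := by omega
    rcases hi with hi | hi <;> simp only [ha, hb, hi]
    · exact le_add_of_nonneg_right (sq_nonneg _)
    · exact le_add_of_nonneg_left (sq_nonneg _)
  have hσR : R ^ 2 ≤ σ ^ 2 := by
    rw [hσ, hR]
    convert hnorm a b using 1
    ring
  have hσ0 : 0 < σ ^ 2 := lt_of_lt_of_le (by positivity) hσR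
  have hmul : ∀ j, N.mulVec v j = N j 0 * v 0 + N j 1 * v 1 := fun j => by
    simp [Matrix.mulVec, dotProduct, Fin.sum_univ_two]
  rw [hmul, hmul]
  have hnv := hnorm (v 0) (v 1)
  set W := (N 0 0 * v 0 + N 0 1 * v 1) ^ 2 + (N 1 0 * v 0 + N 1 1 * v 1) ^ 2
  have hcross : σ ^ 2 * ((N 0 0 * v 0 + N 0 1 * v 1) * (w : ℂ).im -
      (N 1 0 * v 0 + N 1 1 * v 1) * (w : ℂ).re) ^ 2 = (v 0 * b - v 1 * a) ^ 2 := by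
    have h1 : σ * ((N 0 0 * v 0 + N 0 1 * v 1) * (w : ℂ).im -
        (N 1 0 * v 0 + N 1 1 * v 1) * (w : ℂ).re) = N.det * (v 0 * b - v 1 * a) := by
      rw [Matrix.det_fin_two]
      linear_combination (N 1 0 * v 0 + N 1 1 * v 1) * hw1 - (N 0 0 * v 0 + N 0 1 * v 1) * hw2
    rw [← mul_pow, h1, mul_pow, hdet, one_mul]
  have hcs : (v 0 * b - v 1 * a) ^ 2 ≤ V * R := by
    have h1 : V * R = (v 0 * b - v 1 * a) ^ 2 + (v 0 * a + v 1 * b) ^ 2 := by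
      simp only [V, R]
      ring
    exact h1 ▸ le_add_of_nonneg_right (sq_nonneg _)
  have hVR : 0 < V * R := mul_pos hV hR0
  have h1 : 1 < (r * R) ^ 2 := one_lt_pow₀ hrow two_ne_zero
  have hW : r * V * R ≤ W := hrowv.trans hnv
  have hfinal : V * R < σ ^ 2 * (r * W) := by
    clear_value V W R
    calc V * R < (r * R) ^ 2 * (V * R) := lt_mul_of_one_lt_left hVR h1
      _ = R ^ 2 * (r * (r * V * R)) := by ring
      _ ≤ σ ^ 2 * (r * W) := by gcongr
  refine lt_of_mul_lt_mul_left ?_ hσ0.le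
  rw [hcross]
  exact hcs.trans_lt hfinal

lemma opNorm_le_sqrt_of_rows_le (M : Matrix (Fin 2) (Fin 2) ℝ) {c : ℝ}
    (h : ∀ i, M i 0 ^ 2 + M i 1 ^ 2 ≤ c) : opNorm M ≤ √(2 * c) := by
  refine ContinuousLinearMap.opNorm_le_bound _ (Real.sqrt_nonneg _) fun v => ?_
  have hc : 0 ≤ c := le_trans (by positivity) (h 0)
  rw [EuclideanSpace.norm_eq, EuclideanSpace.norm_eq, ← Real.sqrt_mul (by positivity)]
  refine Real.sqrt_le_sqrt ?_
  simp only [Fin.sum_univ_two, Real.norm_eq_abs, sq_abs, LinearMap.coe_toContinuousLinearMap',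
    Matrix.ofLp_toLpLin, Matrix.toLin'_apply, Matrix.mulVec, dotProduct]
  have hcs : ∀ i, (M i 0 * v 0 + M i 1 * v 1) ^ 2 ≤ c * (v 0 ^ 2 + v 1 ^ 2) := by
    intro i
    have h1 : (M i 0 ^ 2 + M i 1 ^ 2) * (v 0 ^ 2 + v 1 ^ 2) ≤ c * (v 0 ^ 2 + v 1 ^ 2) :=
      mul_le_mul_of_nonneg_right (h i) (by positivity)
    nlinarith [sq_nonneg (M i 0 * v 1 - M i 1 * v 0)]
  linarith [hcs 0, hcs 1]

/-- If a probability measure on the projective line gives mass at least `1/2` to arbitrarily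
small balls, then it has an atom of mass at least `1/2`. -/
lemma exists_half_le_measure_singleton (ν : Measure (Proj 2)) [IsProbabilityMeasure ν]
    (h : ∀ k : ℕ, ∃ z : Circle, 1 / 2 ≤ ν (projBall z (1 / (k + 1)))) :
    ∃ E : Proj 2, 1 / 2 ≤ ν {E} := by
  choose z hz using h
  obtain ⟨w, φ, hφ, hlim⟩ := CompactSpace.tendsto_subseq z
  have hball : ∀ j : ℕ, 1 / 2 ≤ ν (projBall w (1 / (j + 1))) := by
    intro j
    have hj : (0 : ℝ) < 1 / (j + 1) := by positivity
    have h1 : Tendsto (fun n => 2 * (1 / ((φ n : ℝ) + 1)) + 2 * dist ((z ∘ φ) n) w ^ 2) atTop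
        (nhds (2 * 0 + 2 * 0 ^ 2)) :=
      ((tendsto_one_div_add_atTop_nhds_zero_nat.comp hφ.tendsto_atTop).const_mul 2).add
        (((tendsto_iff_dist_tendsto_zero.1 hlim).pow 2).const_mul 2)
    have h2 : (2 * 0 + 2 * 0 ^ 2 : ℝ) < 1 / (j + 1) := by linarith
    obtain ⟨n, hn⟩ := (h1.eventually (gt_mem_nhds h2)).exists
    exact (hz (φ n)).trans (measure_mono (projBall_subset_projBall hn.le))
  have hw := circle_re_sq_add_im_sq w
  have hw0 : ![(w : ℂ).re, (w : ℂ).im] ≠ 0 := by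
    intro h0
    have h1 : (w : ℂ).re = 0 := congrFun h0 0
    have h2 : (w : ℂ).im = 0 := congrFun h0 1
    simp [h1, h2] at hw
  refine ⟨Projectivization.mk ℝ _ hw0, ?_⟩
  have hanti : Antitone fun j : ℕ => projBall w (1 / ((j : ℝ) + 1)) := by
    intro i j hij E hE
    simp only [projBall, Set.mem_ofPred_eq] at hE ⊢
    exact hE.trans_le (by gcongr)
  have hinter : ⋂ j : ℕ, projBall w (1 / ((j : ℝ) + 1)) ⊆ {Projectivization.mk ℝ _ hw0} := by
    intro E hE
    induction E using Projectivization.ind with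
    | h v hv =>
    simp only [Set.mem_iInter, mk_mem_projBall] at hE
    have h0 : (v 0 * (w : ℂ).im - v 1 * (w : ℂ).re) ^ 2 ≤ 0 := by
      have h1 := tendsto_one_div_add_atTop_nhds_zero_nat (𝕜 := ℝ)
        |>.mul_const (v 0 ^ 2 + v 1 ^ 2)
      rw [zero_mul] at h1
      exact ge_of_tendsto' h1 fun j => (hE j).le
    have h1 : v 0 * (w : ℂ).im - v 1 * (w : ℂ).re = 0 :=
      pow_eq_zero_iff two_ne_zero |>.1 (le_antisymm h0 (sq_nonneg _))
    rw [Set.mem_singleton_iff, Projectivization.mk_eq_mk_iff']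
    refine ⟨v 0 * (w : ℂ).re + v 1 * (w : ℂ).im, ?_⟩
    ext j
    fin_cases j
    · simp only [Fin.zero_eta, Pi.smul_apply, Matrix.cons_val_zero, smul_eq_mul]
      linear_combination v 0 * hw - (w : ℂ).im * h1
    · simp only [Fin.mk_one, Pi.smul_apply, Matrix.cons_val_one, Matrix.cons_val_zero, smul_eq_mul]
      linear_combination v 1 * hw + (w : ℂ).re * h1
  refine le_trans ?_ (measure_mono hinter)
  exact ge_of_tendsto' (tendsto_measure_iInter_atTop
    (fun j => (measurableSet_projBall w _).nullMeasurableSet) hanti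
    ⟨0, measure_ne_top _ _⟩) hball

lemma measurable_coe_cocycleIter {X : Type*} [MeasurableSpace X] {f : X → X} (hf : Measurable f)
    {A : X → GL (Fin 2) ℝ} (hA : Measurable fun x => (A x : Matrix (Fin 2) (Fin 2) ℝ)) (n : ℕ) :
    Measurable fun x => ((cocycleIter f A n x : GL (Fin 2) ℝ) : Matrix (Fin 2) (Fin 2) ℝ) := by
  have hentry : ∀ {B : X → Matrix (Fin 2) (Fin 2) ℝ}, Measurable B → ∀ i j,
      Measurable fun x => B x i j :=
    fun hB i j => measurable_pi_iff.1 (measurable_pi_iff.1 hB i) j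
  induction n with
  | zero => exact measurable_const
  | succ n ih =>
    refine measurable_pi_iff.2 fun i => measurable_pi_iff.2 fun j => ?_
    simp only [cocycleIter, Units.val_mul, Matrix.mul_apply, Fin.sum_univ_two]
    exact ((hentry (ih.comp hf) i 0).mul (hentry hA 0 j)).add
      ((hentry (ih.comp hf) i 1).mul (hentry hA 1 j))

lemma det_cocycleIter_sq {X : Type*} {f : X → X} {A : X → GL (Fin 2) ℝ}
    (hdet : ∀ x, (A x : Matrix (Fin 2) (Fin 2) ℝ).det = 1 ∨
      (A x : Matrix (Fin 2) (Fin 2) ℝ).det = -1) (n : ℕ) (x : X) :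
    ((cocycleIter f A n x : GL (Fin 2) ℝ) : Matrix (Fin 2) (Fin 2) ℝ).det ^ 2 = 1 := by
  induction n generalizing x with
  | zero => simp [cocycleIter]
  | succ n ih =>
    rw [cocycleIter, Units.val_mul, Matrix.det_mul, mul_pow, ih, one_mul]
    rcases hdet x with h | h <;> simp [h]

lemma iterate_skewProduct {X : Type*} (f : X → X) (A : X → GL (Fin 2) ℝ) (n : ℕ)
    (q : X × Proj 2) :
    (fun q : X × Proj 2 => (f q.1, projAction (A q.1) q.2))^[n] q =
      (f^[n] q.1, projAction (cocycleIter f A n q.1) q.2) := by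
  induction n generalizing q with
  | zero => simp [cocycleIter, projAction_one]
  | succ n ih => rw [Function.iterate_succ_apply, ih, cocycleIter, projAction_mul,
      Function.iterate_succ_apply]

/-- The conditional measures of an invariant measure of an invertible skew product are
equivariant on each measurable set. -/
lemma ae_measure_eq_measure_preimage_of_invariant {X Y : Type*} [MeasurableSpace X]
    [StandardBorelSpace X] [MeasurableSpace Y] {μ : Measure X} [IsProbabilityMeasure μ]
    {T : X → X} (hT : MeasurePreserving T μ μ) (hTinj : Function.Injective T)
    {a : X → Y → Y} {ρ : Measure (X × Y)}
    (hF : MeasurePreserving (fun q : X × Y => (T q.1, a q.1 q.2)) ρ ρ)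
    {ν : X → Measure Y} (hν : AEMeasurable (fun x => (ν x).map (Prod.mk x)) μ)
    (hdis : ρ = μ.bind fun x => (ν x).map (Prod.mk x)) {S : Set Y} (hS : MeasurableSet S) :
    ∀ᵐ x ∂μ, ν (T x) S = ν x (a x ⁻¹' S) := by
  have hmap : ∀ {U : Set (X × Y)}, MeasurableSet U → ∀ x,
      (ν x).map (Prod.mk x) U = ν x (Prod.mk x ⁻¹' U) :=
    fun hU x => Measure.map_apply measurable_prodMk_left hU
  have hsec : ∀ {U : Set (X × Y)}, MeasurableSet U →
      AEMeasurable (fun x => ν x (Prod.mk x ⁻¹' U)) μ := fun {U} hU => by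
    simpa only [Function.comp_def, hmap hU] using
      (Measure.measurable_coe hU).comp_aemeasurable hν
  have hρ : ∀ {U : Set (X × Y)}, MeasurableSet U → ρ U = ∫⁻ x, ν x (Prod.mk x ⁻¹' U) ∂μ :=
    fun {U} hU => by
      rw [hdis, Measure.bind_apply hU hν]
      simp only [hmap hU]
  have hrect : ∀ {D : Set X}, MeasurableSet D → ∀ g : X → Set Y,
      ∫⁻ x, ν x {y | x ∈ D ∧ y ∈ g x} ∂μ = ∫⁻ x in D, ν x (g x) ∂μ := by
    intro D hD g
    rw [← lintegral_indicator hD]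
    refine lintegral_congr fun x => ?_
    by_cases hx : x ∈ D <;> simp [hx]
  have hTe : MeasurableEmbedding T := hT.measurable.measurableEmbedding hTinj
  have hSm : AEMeasurable (fun x => ν x S) μ := by
    simpa using hsec (MeasurableSet.univ.prod hS)
  have hpre : AEMeasurable (fun x => ν x (a x ⁻¹' S)) μ := by
    refine (hsec (hF.measurable (MeasurableSet.univ.prod hS))).congr
      (Eventually.of_forall fun x => ?_)
    refine congrArg (ν x) ?_
    ext y
    simp
  refine ae_eq_of_forall_setLIntegral_eq_of_sigmaFinite₀
    (hSm.comp_quasiMeasurePreserving hT.quasiMeasurePreserving)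
    hpre fun C hC _ => ?_
  have hD : MeasurableSet (T '' C) := hTe.measurableSet_image.2 hC
  have h1 := hF.measure_preimage (hD.prod hS).nullMeasurableSet
  rw [hρ (hD.prod hS), hρ (hF.measurable (hD.prod hS))] at h1
  calc ∫⁻ x in C, ν (T x) S ∂μ = ∫⁻ x in T '' C, ν x S ∂μ :=
        hT.setLIntegral_comp_emb hTe (fun x => ν x S) C
    _ = ∫⁻ x, ν x {y | x ∈ T '' C ∧ y ∈ S} ∂μ := (hrect hD fun _ => S).symm
    _ = ∫⁻ x, ν x {y | x ∈ C ∧ y ∈ a x ⁻¹' S} ∂μ := by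
        refine h1.symm.trans (lintegral_congr fun x => ?_)
        congr 1
        ext y
        simp [hTinj.eq_iff]
    _ = ∫⁻ x in C, ν x (a x ⁻¹' S) ∂μ := hrect hC _

/-- If both `ν` and its image under `M` give mass less than `1/2` to all balls of radius `r` of
a dense sequence, then the norm of `M` is bounded in terms of `r`. -/
lemma opNorm_le_of_measure_projBall_lt (M : GL (Fin 2) ℝ)
    (hdet : (M : Matrix (Fin 2) (Fin 2) ℝ).det ^ 2 = 1) {r : ℝ} (hr : 0 < r)
    (ν : Measure (Proj 2)) [IsProbabilityMeasure ν]
    (h : ∀ n, ν (projBall (TopologicalSpace.denseSeq Circle n) (4 * r)) < 1 / 2)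
    (hM : ∀ n, ν (projAction M ⁻¹' projBall (TopologicalSpace.denseSeq Circle n) (4 * r))
      < 1 / 2) :
    opNorm (M : Matrix (Fin 2) (Fin 2) ℝ) ≤ √(2 * r⁻¹) := by
  refine opNorm_le_sqrt_of_rows_le _ fun i => ?_
  by_contra! hrow
  obtain ⟨z, w, hzw⟩ := exists_projAction_mem_projBall M hdet hr i
    ((inv_lt_iff_one_lt_mul₀' hr).1 hrow)
  obtain ⟨m, hm⟩ := exists_denseSeq_projBall_subset z hr
  obtain ⟨n, hn⟩ := exists_denseSeq_projBall_subset w hr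
  have hcover : (Set.univ : Set (Proj 2)) ⊆ projBall (TopologicalSpace.denseSeq Circle m) (4 * r) ∪
      projAction M ⁻¹' projBall (TopologicalSpace.denseSeq Circle n) (4 * r) := fun E _ =>
    (em (E ∈ projBall z r)).imp (fun hE => hm hE) fun hE => hn (hzw E hE)
  have h1 : (1 : ℝ≥0∞) < 1 / 2 + 1 / 2 :=
    calc (1 : ℝ≥0∞) = ν Set.univ := measure_univ.symm
      _ ≤ _ := (measure_mono hcover).trans (measure_union_le _ _)
      _ < 1 / 2 + 1 / 2 := ENNReal.add_lt_add (h m) (hM n)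
  rw [ENNReal.add_halves] at h1
  exact lt_irrefl _ h1

/-- For an essentially unbounded `SL±(2)`-valued cocycle over an ergodic
invertible transformation, the disintegration of any invariant probability measure on
`X × ℙ(ℝ²)` has an atom of mass at least `1/2` almost everywhere. -/
theorem stmt5
    {X : Type*} [MeasurableSpace X] [StandardBorelSpace X]
    (μ : Measure X) [IsProbabilityMeasure μ]
    (f : X → X) (hbij : Function.Bijective f) (herg : Ergodic f μ)
    (A : X → GL (Fin 2) ℝ)
    (hA : Measurable fun x => ((A x : Matrix (Fin 2) (Fin 2) ℝ)))
    (hdet : ∀ x, (A x : Matrix (Fin 2) (Fin 2) ℝ).det = 1 ∨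
                 (A x : Matrix (Fin 2) (Fin 2) ℝ).det = -1)
    (hunb : ∀ᵐ x ∂μ, ConvergesEssentiallyToInfinity fun n =>
        opNorm ((cocycleIter f A n x : GL (Fin 2) ℝ) : Matrix (Fin 2) (Fin 2) ℝ))
    (μhat : Measure (X × Proj 2)) [IsProbabilityMeasure μhat]
    (hproj : μhat.map Prod.fst = μ)
    (hinv : μhat.map (fun q : X × Proj 2 => (f q.1, projAction (A q.1) q.2)) = μhat)
    (ν : X → Measure (Proj 2)) (hνp : ∀ x, IsProbabilityMeasure (ν x))
    (hdis : μhat = μ.bind fun x => (ν x).map fun z => (x, z)) :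
    ∀ᵐ x ∂μ, (1 : ℝ≥0∞) / 2 ≤ ⨆ E : Proj 2, ν x {E} := by
  set F : X × Proj 2 → X × Proj 2 := fun q => (f q.1, projAction (A q.1) q.2) with hF
  have hf : MeasurePreserving f μ μ := herg.toMeasurePreserving
  have hν : AEMeasurable (fun x => (ν x).map (Prod.mk x)) μ := by
    by_contra hν
    have h0 : μhat = 0 := by
      rw [hdis, Measure.bind, Measure.map_of_not_aemeasurable hν, Measure.join_zero]
    exact IsProbabilityMeasure.ne_zero μhat h0
  have hFm : MeasurePreserving F μhat μhat := ⟨measurable_skewProduct hf.measurable hA, hinv⟩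
  have hequiv : ∀ n, ∀ S : Set (Proj 2), MeasurableSet S →
      ∀ᵐ x ∂μ, ν (f^[n] x) S = ν x (projAction (cocycleIter f A n x) ⁻¹' S) := by
    intro n S hS
    have hFn := hFm.iterate n
    rw [funext (iterate_skewProduct f A n)] at hFn
    exact ae_measure_eq_measure_preimage_of_invariant (hf.iterate n) (hbij.injective.iterate n)
      hFn hν hdis hS
  set d := TopologicalSpace.denseSeq Circle
  have hballs : ∀ᵐ x ∂μ, ∀ k n m : ℕ, ν (f^[n] x) (projBall (d m) (1 / (k + 1))) =
      ν x (projAction (cocycleIter f A n x) ⁻¹' projBall (d m) (1 / (k + 1))) := by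
    simp only [ae_all_iff]
    exact fun k n m => hequiv n _ (measurableSet_projBall _ _)
  have hmeas : ∀ S : Set (Proj 2), MeasurableSet S → AEMeasurable (fun x => ν x S) μ := by
    intro S hS
    have hU : MeasurableSet (Set.univ ×ˢ S : Set (X × Proj 2)) := MeasurableSet.univ.prod hS
    refine ((Measure.measurable_coe hU).comp_aemeasurable hν).congr
      (Eventually.of_forall fun x => ?_)
    simp [Measure.map_apply measurable_prodMk_left hU]
  set G : ℕ → Set X := fun k => {x | ∀ m, ν x (projBall (d m) (1 / (k + 1))) < 1 / 2} with hG
  have hGm : ∀ k, NullMeasurableSet (G k) μ := by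
    intro k
    simp only [hG, Set.ofPred_forall]
    exact NullMeasurableSet.iInter fun m =>
      nullMeasurableSet_lt (hmeas _ (measurableSet_projBall _ _)) aemeasurable_const
  have hG0 : ∀ k, μ (G k) = 0 := by
    intro k
    obtain ⟨G', hG'G, hG'm, hG'ae⟩ := (hGm k).exists_measurable_subset_ae_eq
    rw [← measure_congr hG'ae]
    refine measure_eq_zero_of_small_visit_frequency hf hG'm ?_
    filter_upwards [hunb, hballs] with x hx hxb hxG δ hδ
    have hr : (0 : ℝ) < 1 / (4 * (k + 1)) := by positivity
    have hr4 : 4 * (1 / (4 * ((k : ℝ) + 1))) = 1 / (k + 1) := by field_simp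
    refine exists_birkhoffSum_lt_of_lowerDensity_eq_zero
      (hx √(2 * (1 / (4 * ((k : ℝ) + 1)))⁻¹) (by positivity)) (fun n hn => ?_) hδ
    rw [Set.mem_ofPred_eq]
    refine opNorm_le_of_measure_projBall_lt _ (det_cocycleIter_sq hdet n x) hr (ν x) ?_ ?_
    · rw [hr4]
      exact hG'G hxG
    · rw [hr4]
      exact fun m => hxb k n m ▸ hG'G hn m
  have hae : ∀ᵐ x ∂μ, ∀ k, x ∉ G k :=
    ae_all_iff.2 fun k => measure_eq_zero_iff_ae_notMem.1 (hG0 k)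
  filter_upwards [hae] with x hx
  have : ∀ k : ℕ, ∃ z : Circle, 1 / 2 ≤ ν x (projBall z (1 / (k + 1))) := by
    intro k
    have hk := hx k
    simp only [hG, Set.mem_ofPred_eq, not_forall, not_lt] at hk
    exact hk.imp' d fun _ h => h
  obtain ⟨E, hE⟩ := exists_half_le_measure_singleton (ν x) this
  exact le_iSup_of_le E hE
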